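/- arXiv:2208.11414 — 2 statements merged into one kernel-verified Lean document; each statement's English description precedes it below -/
import Mathlib

section
/- Let G be a finite simple undirected graph containing a fork gadget F none of whose six vertices is s or t. In any non-transitive st-orientation of G in which the boundary edge e1 is oriented entering F (directed from a to v), the orientation of every edge of F is forced: e2 is directed from v to m1, e5 from m1 to w, e3 from v to x, e6 from x to w, e4 from v to m2, e8 from m2 to z, e7 from x to z, e9 from w to b, and e10 from z to c. -/
variable {V : Type*}

/-- `D` is an orientation of `G`: every directed edge lies on an edge of `G`,
and every edge of `G` receives exactly one of the two possible directions. -/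
def IsOrientation (G : SimpleGraph V) (D : V → V → Prop) : Prop :=
  (∀ u v, D u v → G.Adj u v) ∧ ∀ u v, G.Adj u v → (D u v ↔ ¬ D v u)

/-- A digraph is acyclic if it has no directed cycle. -/
def DigraphAcyclic (D : V → V → Prop) : Prop :=
  ∀ v, ¬ Relation.TransGen D v v

/-- An st-orientation: an acyclic orientation with unique source `s` and unique sink `t`. -/
def IsSTOrientation (G : SimpleGraph V) (D : V → V → Prop) (s t : V) : Prop :=
  IsOrientation G D ∧ DigraphAcyclic D ∧
    (∀ u, ¬ D u s) ∧ (∀ v, (∀ u, ¬ D u v) → v = s) ∧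
    (∀ u, ¬ D t u) ∧ (∀ v, (∀ u, ¬ D v u) → v = t)

/-- A directed edge `(u,v)` is transitive if there is a directed path from `u` to `v`
of length at least 2. -/
def TransEdge (D : V → V → Prop) (u v : V) : Prop :=
  D u v ∧ ∃ w, D u w ∧ Relation.TransGen D w v

/-- A non-transitive st-orientation: an st-orientation with no transitive edge. -/
def IsNonTransSTOrientation (G : SimpleGraph V) (D : V → V → Prop) (s t : V) : Prop :=
  IsSTOrientation G D s t ∧ ∀ u v, ¬ TransEdge D u v

/-- A fork gadget in `G`: six vertices `v, m1, m2, x, w, z` with the prescribed internal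
edges, three boundary edges `e1 = {a,v}`, `e9 = {w,b}`, `e10 = {z,c}` to outside vertices
`a, b, c`, and no other incident edges at the six fork vertices. -/
structure ForkGadget (G : SimpleGraph V) where
  a : V
  v : V
  m1 : V
  m2 : V
  x : V
  w : V
  z : V
  b : V
  c : V
  distinct : List.Pairwise (· ≠ ·) [v, m1, m2, x, w, z]
  a_outside : a ∉ [v, m1, m2, x, w, z]
  b_outside : b ∉ [v, m1, m2, x, w, z]
  c_outside : c ∉ [v, m1, m2, x, w, z]
  nbr_v : ∀ u, G.Adj v u ↔ u = a ∨ u = m1 ∨ u = x ∨ u = m2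
  nbr_m1 : ∀ u, G.Adj m1 u ↔ u = v ∨ u = w
  nbr_m2 : ∀ u, G.Adj m2 u ↔ u = v ∨ u = z
  nbr_x : ∀ u, G.Adj x u ↔ u = v ∨ u = w ∨ u = z
  nbr_w : ∀ u, G.Adj w u ↔ u = m1 ∨ u = x ∨ u = b
  nbr_z : ∀ u, G.Adj z u ↔ u = m2 ∨ u = x ∨ u = c

/-!
Without directed cycles and transitive edges, a 4-cycle of `G` with one side `p → m → q` directed
has its other side `p → y → q` directed as well. As `m1` and `m2` have degree two and are neither
sources nor sinks, each of the 4-cycles `v, m1, w, x` and `v, m2, z, x` has a directed side, so it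
is directed away from `v` or towards `v`, and the shared edge `{v,x}` makes the two choices agree.
The edge `a → v` rules out the second choice, since `v` is not a sink. Finally `e9` and `e10` must
exit, since `w` and `z` are not sinks.
-/

section Digraph

variable {D : V → V → Prop} {p q u y : V}

theorem TransEdge.of_transGen (huq : D u q) (hup : Relation.TransGen D u p) (hpq : D p q) :
    TransEdge D u q :=
  have ⟨r, hur, hrp⟩ := Relation.TransGen.head'_iff.mp hup
  ⟨huq, r, hur, .tail' hrp hpq⟩

theorem arc_and_arc_of_transGen (hac : DigraphAcyclic D) (hnt : ∀ u v, ¬ TransEdge D u v)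
    (hpq : Relation.TransGen D p q) (hpy : D p y ∨ D y p) (hyq : D y q ∨ D q y) :
    D p y ∧ D y q := by
  rcases hpy with hpy | hyp <;> rcases hyq with hyq | hqy
  · exact ⟨hpy, hyq⟩
  · exact absurd (TransEdge.of_transGen hpy hpq hqy) (hnt p y)
  · exact absurd ⟨hyq, p, hyp, hpq⟩ (hnt y q)
  · exact absurd ((hpq.tail hqy).tail hyp) (hac p)

end Digraph

namespace IsOrientation

variable {G : SimpleGraph V} {D : V → V → Prop} {u v : V}

theorem asymm (hO : IsOrientation G D) (huv : D u v) : ¬ D v u :=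
  (hO.2 u v (hO.1 u v huv)).mp huv

theorem arc_or_arc (hO : IsOrientation G D) (huv : G.Adj u v) : D u v ∨ D v u :=
  or_iff_not_imp_right.mpr (hO.2 u v huv).mpr

theorem arc_of_forall_adj (hO : IsOrientation G D) (hout : ∃ y, D u y)
    (hnbr : ∀ y, G.Adj u y → y = v ∨ D y u) : D u v := by
  obtain ⟨y, huy⟩ := hout
  obtain rfl | hyu := hnbr y (hO.1 u y huy)
  · exact huy
  · exact absurd hyu (hO.asymm huy)

end IsOrientation

namespace IsSTOrientation

variable {G : SimpleGraph V} {D : V → V → Prop} {s t v : V}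

theorem exists_arc_to (hD : IsSTOrientation G D s t) (hv : v ≠ s) : ∃ u, D u v := by
  obtain ⟨-, -, -, eq_source, -, -⟩ := hD
  by_contra! hno
  exact hv (eq_source v hno)

theorem exists_arc_from (hD : IsSTOrientation G D s t) (hv : v ≠ t) : ∃ u, D v u := by
  obtain ⟨-, -, -, -, -, eq_sink⟩ := hD
  by_contra! hno
  exact hv (eq_sink v hno)

end IsSTOrientation

namespace ForkGadget

variable {G : SimpleGraph V} {D : V → V → Prop}

/-- The reflection of a fork gadget, which exchanges `m1, w, b` with `m2, z, c`. Facts about one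
prong of the fork yield the corresponding facts about the other. -/
def swap (F : ForkGadget G) : ForkGadget G where
  a := F.a
  v := F.v
  m1 := F.m2
  m2 := F.m1
  x := F.x
  w := F.z
  z := F.w
  b := F.c
  c := F.b
  distinct := by
    have h := F.distinct
    grind
  a_outside := by
    have h := F.a_outside
    grind
  b_outside := by
    have h := F.c_outside
    grind
  c_outside := by
    have h := F.b_outside
    grind
  nbr_v u := by rw [F.nbr_v]; tauto
  nbr_m1 := F.nbr_m2
  nbr_m2 := F.nbr_m1
  nbr_x u := by rw [F.nbr_x]; tauto
  nbr_w := F.nbr_z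
  nbr_z := F.nbr_w

theorem adj_v_x (F : ForkGadget G) : G.Adj F.v F.x :=
  (F.nbr_v F.x).mpr (by simp)

theorem adj_x_w (F : ForkGadget G) : G.Adj F.x F.w :=
  (F.nbr_x F.w).mpr (by simp)

theorem arc_m1_w_of_arc_v_m1 (F : ForkGadget G) (hO : IsOrientation G D)
    (hm1 : ∃ y, D F.m1 y) (hvm1 : D F.v F.m1) : D F.m1 F.w :=
  hO.arc_of_forall_adj hm1 fun y hy => by
    obtain rfl | rfl := (F.nbr_m1 y).mp hy
    · exact .inr hvm1
    · exact .inl rfl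

theorem arc_m1_v_of_arc_w_m1 (F : ForkGadget G) (hO : IsOrientation G D)
    (hm1 : ∃ y, D F.m1 y) (hwm1 : D F.w F.m1) : D F.m1 F.v :=
  hO.arc_of_forall_adj hm1 fun y hy => by
    obtain rfl | rfl := (F.nbr_m1 y).mp hy
    · exact .inl rfl
    · exact .inr hwm1

theorem arc_w_b_of_arc_m1_w_of_arc_x_w (F : ForkGadget G) (hO : IsOrientation G D)
    (hw : ∃ y, D F.w y) (hm1w : D F.m1 F.w) (hxw : D F.x F.w) : D F.w F.b :=
  hO.arc_of_forall_adj hw fun y hy => by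
    obtain rfl | rfl | rfl := (F.nbr_w y).mp hy
    · exact .inr hm1w
    · exact .inr hxw
    · exact .inl rfl

theorem arc_v_x_and_arc_x_w_of_arc_v_m1 (F : ForkGadget G) (hO : IsOrientation G D)
    (hac : DigraphAcyclic D) (hnt : ∀ u v, ¬ TransEdge D u v)
    (hm1 : ∃ y, D F.m1 y) (hvm1 : D F.v F.m1) : D F.v F.x ∧ D F.x F.w :=
  have hm1w := F.arc_m1_w_of_arc_v_m1 hO hm1 hvm1
  arc_and_arc_of_transGen hac hnt (.tail (.single hvm1) hm1w)
    (hO.arc_or_arc F.adj_v_x) (hO.arc_or_arc F.adj_x_w)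

theorem arc_x_v_of_arc_w_m1 (F : ForkGadget G) (hO : IsOrientation G D)
    (hac : DigraphAcyclic D) (hnt : ∀ u v, ¬ TransEdge D u v)
    (hm1 : ∃ y, D F.m1 y) (hwm1 : D F.w F.m1) : D F.x F.v :=
  have hm1v := F.arc_m1_v_of_arc_w_m1 hO hm1 hwm1
  (arc_and_arc_of_transGen hac hnt (.tail (.single hwm1) hm1v)
    (hO.arc_or_arc F.adj_x_w.symm) (hO.arc_or_arc F.adj_v_x.symm)).2

theorem arc_v_x_of_arc_a_v (F : ForkGadget G) (hO : IsOrientation G D)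
    (hac : DigraphAcyclic D) (hnt : ∀ u v, ¬ TransEdge D u v)
    (hv : ∃ y, D F.v y) (hm1 : ∃ y, D F.m1 y) (hm2 : ∃ y, D F.m2 y)
    (hav : D F.a F.v) : D F.v F.x := by
  obtain ⟨y, hvy⟩ := hv
  obtain rfl | rfl | rfl | rfl := (F.nbr_v y).mp (hO.1 _ _ hvy)
  · exact absurd hvy (hO.asymm hav)
  · exact (F.arc_v_x_and_arc_x_w_of_arc_v_m1 hO hac hnt hm1 hvy).1
  · exact hvy
  · exact (F.swap.arc_v_x_and_arc_x_w_of_arc_v_m1 hO hac hnt hm2 hvy).1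

theorem arc_v_m1_of_arc_v_x (F : ForkGadget G) (hO : IsOrientation G D)
    (hac : DigraphAcyclic D) (hnt : ∀ u v, ¬ TransEdge D u v)
    (hm1_in : ∃ y, D y F.m1) (hm1_out : ∃ y, D F.m1 y) (hvx : D F.v F.x) :
    D F.v F.m1 := by
  obtain ⟨y, hym1⟩ := hm1_in
  obtain rfl | rfl := (F.nbr_m1 y).mp (hO.1 _ _ hym1).symm
  · exact hym1
  · exact absurd (F.arc_x_v_of_arc_w_m1 hO hac hnt hm1_out hym1) (hO.asymm hvx)

theorem prong_arcs_of_arc_v_x (F : ForkGadget G) (hO : IsOrientation G D)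
    (hac : DigraphAcyclic D) (hnt : ∀ u v, ¬ TransEdge D u v)
    (hm1_in : ∃ y, D y F.m1) (hm1_out : ∃ y, D F.m1 y)
    (hw : ∃ y, D F.w y) (hvx : D F.v F.x) :
    D F.v F.m1 ∧ D F.m1 F.w ∧ D F.x F.w ∧ D F.w F.b := by
  have hvm1 := F.arc_v_m1_of_arc_v_x hO hac hnt hm1_in hm1_out hvx
  have hm1w := F.arc_m1_w_of_arc_v_m1 hO hm1_out hvm1
  have hxw := (F.arc_v_x_and_arc_x_w_of_arc_v_m1 hO hac hnt hm1_out hvm1).2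
  exact ⟨hvm1, hm1w, hxw, F.arc_w_b_of_arc_m1_w_of_arc_x_w hO hw hm1w hxw⟩

end ForkGadget

theorem stmt4_general {V : Type*} {G : SimpleGraph V} {D : V → V → Prop}
    (hO : IsOrientation G D) (hac : DigraphAcyclic D) (hnt : ∀ u v, ¬ TransEdge D u v)
    (F : ForkGadget G) (hin : ∀ u ∈ [F.m1, F.m2], ∃ y, D y u)
    (hout : ∀ u ∈ [F.v, F.m1, F.m2, F.w, F.z], ∃ y, D u y) (he1 : D F.a F.v) :
    D F.v F.m1 ∧ D F.m1 F.w ∧ D F.v F.x ∧ D F.x F.w ∧ D F.v F.m2 ∧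
    D F.m2 F.z ∧ D F.x F.z ∧ D F.w F.b ∧ D F.z F.c := by
  simp only [List.forall_mem_cons, List.not_mem_nil, false_imp_iff, implies_true,
    and_true] at hin hout
  obtain ⟨hm1_in, hm2_in⟩ := hin
  obtain ⟨hv, hm1, hm2, hw, hz⟩ := hout
  have hvx := F.arc_v_x_of_arc_a_v hO hac hnt hv hm1 hm2 he1
  have ⟨hvm1, hm1w, hxw, hwb⟩ := F.prong_arcs_of_arc_v_x hO hac hnt hm1_in hm1 hw hvx
  have ⟨hvm2, hm2z, hxz, hzc⟩ := F.swap.prong_arcs_of_arc_v_x hO hac hnt hm2_in hm2 hz hvx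
  exact ⟨hvm1, hm1w, hvx, hxw, hvm2, hm2z, hxz, hwb, hzc⟩

/-- In any non-transitive st-orientation of a graph containing a fork gadget avoiding
`s` and `t`, if the boundary edge `e1` enters the gadget, then the orientation of every
edge of the gadget is forced. -/
theorem stmt4 {V : Type*} (G : SimpleGraph V) (s t : V) (hst : s ≠ t)
    (D : V → V → Prop) (hD : IsNonTransSTOrientation G D s t)
    (F : ForkGadget G)
    (hnost : ∀ u, u ∈ [F.v, F.m1, F.m2, F.x, F.w, F.z] → u ≠ s ∧ u ≠ t)
    (he1 : D F.a F.v) :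
    D F.v F.m1 ∧ D F.m1 F.w ∧ D F.v F.x ∧ D F.x F.w ∧ D F.v F.m2 ∧
    D F.m2 F.z ∧ D F.x F.z ∧ D F.w F.b ∧ D F.z F.c :=
  stmt4_general hD.1.1 hD.1.2.1 hD.2 F (fun u hu => hD.1.exists_arc_to (hnost u (by grind)).1)
    (fun u hu => hD.1.exists_arc_from (hnost u (by grind)).2) he1
end

section
/- Let G* be a finite simple undirected graph with distinct vertices s* and t*, and let G+ be the graph obtained from G* by adding two new vertices s+ and t+ together with the edges {s+, s*} and {t+, t*}. Then for any distinct vertices s and t of G+, if G+ admits an st-orientation, then {s, t} = {s+, t+}. -/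
variable {V : Type*}

/-- The graph `G⁺` obtained from `Gstar` by adding two new vertices `s⁺ := Sum.inr false`
and `t⁺ := Sum.inr true`, together with the edges `{s⁺, s*}` and `{t⁺, t*}`. -/
def graphPlus (Gstar : SimpleGraph V) (sstar tstar : V) : SimpleGraph (V ⊕ Bool) :=
  SimpleGraph.fromRel fun x y =>
    (∃ u w, x = Sum.inl u ∧ y = Sum.inl w ∧ Gstar.Adj u w) ∨
    (x = Sum.inr false ∧ y = Sum.inl sstar) ∨
    (x = Sum.inr true ∧ y = Sum.inl tstar)

/-- A source of the digraph `D`: a vertex with no incoming edge. Stated for arbitrary relations, in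
the form of the source conditions of `IsSTOrientation`. -/
def IsSource (D : V → V → Prop) (v : V) : Prop :=
  ∀ u, ¬ D u v

/-- A sink of the digraph `D`: a vertex with no outgoing edge. Stated for arbitrary relations, in
the form of the sink conditions of `IsSTOrientation`. -/
def IsSink (D : V → V → Prop) (v : V) : Prop :=
  ∀ u, ¬ D v u

section Orientation

variable {G : SimpleGraph V} {D : V → V → Prop}

theorem IsOrientation.asymm_s11 (hD : IsOrientation G D) {u v : V} (huv : D u v) : ¬ D v u :=
  (hD.2 u v (hD.1 u v huv)).1 huv

theorem IsOrientation.isSource_or_isSink_of_subsingleton_neighborSet (hD : IsOrientation G D)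
    {v : V} (hv : (G.neighborSet v).Subsingleton) : IsSource D v ∨ IsSink D v := by
  refine or_iff_not_imp_left.2 fun hsource w hvw ↦ ?_
  obtain ⟨u, huv⟩ : ∃ u, D u v := by simpa only [IsSource, not_forall, not_not] using hsource
  have huw : u = w := hv (hD.1 u v huv).symm (hD.1 v w hvw)
  exact hD.asymm_s11 huv (huw ▸ hvw)

theorem stmt11_general (hD : IsOrientation G D) {s t : V}
    (hs : ∀ v, IsSource D v → v = s) (ht : ∀ v, IsSink D v → v = t) {a b : V} (hab : a ≠ b)
    (ha : (G.neighborSet a).Subsingleton) (hb : (G.neighborSet b).Subsingleton) :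
    (s = a ∧ t = b) ∨ (s = b ∧ t = a) := by
  have eq_or_eq {v : V} (hv : (G.neighborSet v).Subsingleton) : v = s ∨ v = t :=
    (hD.isSource_or_isSink_of_subsingleton_neighborSet hv).imp (hs v) (ht v)
  rcases eq_or_eq ha with rfl | rfl
  · exact .inl ⟨rfl, ((eq_or_eq hb).resolve_left hab.symm).symm⟩
  · exact .inr ⟨((eq_or_eq hb).resolve_right hab.symm).symm, rfl⟩

end Orientation

section GraphPlus

variable (Gstar : SimpleGraph V) (sstar tstar : V)

theorem neighborSet_graphPlus_inr_false :
    (graphPlus Gstar sstar tstar).neighborSet (Sum.inr false) = {Sum.inl sstar} := by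
  ext (u | b) <;> simp [graphPlus]

theorem neighborSet_graphPlus_inr_true :
    (graphPlus Gstar sstar tstar).neighborSet (Sum.inr true) = {Sum.inl tstar} := by
  ext (u | b) <;> simp [graphPlus]

end GraphPlus

/-- If `G⁺` admits an st-orientation for distinct vertices `s`, `t`, then
`{s, t} = {s⁺, t⁺}`. -/
theorem stmt11 {V : Type*} (Gstar : SimpleGraph V) (sstar tstar : V)
    (hstar : sstar ≠ tstar) (s t : V ⊕ Bool) (hst : s ≠ t)
    (D : (V ⊕ Bool) → (V ⊕ Bool) → Prop)
    (hD : IsSTOrientation (graphPlus Gstar sstar tstar) D s t) :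
    (s = Sum.inr false ∧ t = Sum.inr true) ∨
    (s = Sum.inr true ∧ t = Sum.inr false) := by
  obtain ⟨hor, -, -, hs, -, ht⟩ := hD
  exact stmt11_general hor hs ht (by simp) (by simp [neighborSet_graphPlus_inr_false])
    (by simp [neighborSet_graphPlus_inr_true])
end
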